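/- arXiv:2509.01278 — 2 statements merged into one kernel-verified Lean document; each statement's English description precedes it below -/
import Mathlib

section
/- Let σ : ℝ → (real d×d matrices) be such that σ(s) is symmetric positive definite for every s. Fix t ∈ ℝ, and suppose σ has derivative σ′ at t and the map s ↦ σ(s)⁻¹ has derivative τ′ at t. Then tr(σ′ · τ′) ≤ 0. (This is the one-directional form of ∇σ : ∇σ⁻¹ ≤ 0.) -/
/-!
The derivative of matrix inversion gives `τ' = -(σ⁻¹ σ' σ⁻¹)`, hence
`tr (σ' τ') = -tr ((σ' σ⁻¹ σ') σ⁻¹)`. As a limit of Hermitian difference quotients, `σ'` is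
Hermitian, so `σ' σ⁻¹ σ'` is positive semidefinite, and the trace of a product of two positive
semidefinite matrices is nonnegative.
-/

open Matrix

attribute [local instance] Matrix.normedAddCommGroup Matrix.normedSpace

section Trace

open scoped ComplexOrder MatrixOrder

variable {n K : Type*} [Fintype n] [RCLike K] {A P Q : Matrix n n K}

theorem trace_mul_nonneg_of_posSemidef (hP : P.PosSemidef) (hQ : Q.PosSemidef) :
    0 ≤ (P * Q).trace := by
  classical
  obtain ⟨C, rfl⟩ := CStarAlgebra.nonneg_iff_eq_star_mul_self.1 hQ.nonneg
  calc
    0 ≤ (C * P * Cᴴ).trace := (hP.mul_mul_conjTranspose_same C).trace_nonneg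
    _ = (P * (star C * C)).trace := by
      rw [star_eq_conjTranspose, ← Matrix.mul_assoc P, trace_mul_comm (P * Cᴴ), Matrix.mul_assoc]

theorem trace_mul_mul_mul_nonneg_of_isHermitian (hA : A.IsHermitian) (hP : P.PosSemidef)
    (hQ : Q.PosSemidef) : 0 ≤ (A * P * A * Q).trace := by
  have hAPA : (A * P * A).PosSemidef := by
    simpa only [hA.eq] using hP.mul_mul_conjTranspose_same A
  exact trace_mul_nonneg_of_posSemidef hAPA hQ

end Trace

section Deriv

open scoped Ring Topology

variable {𝕜 : Type*} [NontriviallyNormedField 𝕜] {t : 𝕜}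

theorem hasDerivAt_ringInverse {R : Type*} [NormedRing R] [HasSummableGeomSeries R]
    [NormedAlgebra 𝕜 R] {f : 𝕜 → R} {f' : R} (hf : HasDerivAt f f' t) (ht : IsUnit (f t)) :
    HasDerivAt (fun s => (f s)⁻¹ʳ) (-((f t)⁻¹ʳ * f' * (f t)⁻¹ʳ)) t := by
  obtain ⟨u, hu⟩ := ht
  have hinv : HasFDerivAt Ring.inverse _ (f t) := hu ▸ hasFDerivAt_ringInverse (𝕜 := 𝕜) u
  simpa [← hu, Function.comp_def] using hinv.comp_hasDerivAt t hf

theorem hasDerivAt_matrix_inv {n R : Type*} [Fintype n] [DecidableEq n] [NormedCommRing R]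
    [CompleteSpace R] [NormedAlgebra 𝕜 R] {σ : 𝕜 → Matrix n n R} {σ' : Matrix n n R}
    (hσ : HasDerivAt σ σ' t) (ht : IsUnit (σ t)) :
    HasDerivAt (fun s => (σ s)⁻¹) (-((σ t)⁻¹ * σ' * (σ t)⁻¹)) t := by
  -- `HasDerivAt` sees only the topology on matrices, so a submultiplicative norm may be chosen.
  let _ : NormedRing (Matrix n n R) := Matrix.linftyOpNormedRing
  let _ : NormedAlgebra 𝕜 (Matrix n n R) := Matrix.linftyOpNormedAlgebra
  have : @CompleteSpace (Matrix n n R) PseudoMetricSpace.toUniformSpace :=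
    inferInstanceAs (CompleteSpace (n → n → R))
  simp only [nonsing_inv_eq_ringInverse]
  exact hasDerivAt_ringInverse hσ ht

theorem isSelfAdjoint_of_hasDerivAt [StarRing 𝕜] [TrivialStar 𝕜] {F : Type*}
    [NormedAddCommGroup F] [NormedSpace 𝕜 F] [StarAddMonoid F] [StarModule 𝕜 F] [ContinuousStar F]
    {f : 𝕜 → F} {f' : F} (hf : HasDerivAt f f' t) (hsa : ∀ᶠ s in 𝓝 t, IsSelfAdjoint (f s)) :
    IsSelfAdjoint f' :=
  (hf.star.congr_of_eventuallyEq (hsa.mono fun _ hs => hs.star_eq.symm)).unique hf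

end Deriv

open scoped ComplexOrder in
theorem trace_deriv_mul_deriv_inv_nonpos_general {n 𝕜 K : Type*} [Fintype n] [DecidableEq n]
    [NontriviallyNormedField 𝕜] [RCLike K] [NormedAlgebra 𝕜 K] {σ : 𝕜 → Matrix n n K} {t : 𝕜}
    {σ' τ' : Matrix n n K} (hpos : (σ t).PosDef) (hσ' : σ'.IsHermitian) (hσ : HasDerivAt σ σ' t)
    (hτ : HasDerivAt (fun s => (σ s)⁻¹) τ' t) : (σ' * τ').trace ≤ 0 := by
  have hτ' : τ' = -((σ t)⁻¹ * σ' * (σ t)⁻¹) :=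
    hτ.unique (hasDerivAt_matrix_inv hσ hpos.isUnit)
  have hinv : (σ t)⁻¹.PosSemidef := hpos.inv.posSemidef
  calc
    (σ' * τ').trace = -(σ' * (σ t)⁻¹ * σ' * (σ t)⁻¹).trace := by
      simp only [hτ', mul_neg, trace_neg, Matrix.mul_assoc]
    _ ≤ 0 := neg_nonpos.2 (trace_mul_mul_mul_nonneg_of_isHermitian hσ' hinv hinv)

/-- If `σ : ℝ → Matrix` is symmetric positive definite valued, `σ` has derivative `σ'` at
`t` and `s ↦ (σ s)⁻¹` has derivative `τ'` at `t`, then `tr (σ' * τ') ≤ 0`. -/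
theorem trace_deriv_mul_deriv_inv_nonpos {d : ℕ}
    (σ : ℝ → Matrix (Fin d) (Fin d) ℝ)
    (hsymm : ∀ s, (σ s)ᵀ = σ s)
    (hpos : ∀ s, ∀ x : Fin d → ℝ, x ≠ 0 → 0 < x ⬝ᵥ (σ s) *ᵥ x)
    (t : ℝ) (σ' τ' : Matrix (Fin d) (Fin d) ℝ)
    (hσ : HasDerivAt σ σ' t)
    (hτ : HasDerivAt (fun s => (σ s)⁻¹) τ' t) :
    (σ' * τ').trace ≤ 0 := by
  have hherm : ∀ s, (σ s).IsHermitian := fun s =>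
    (conjTranspose_eq_transpose_of_trivial _).trans (hsymm s)
  have hposDef : (σ t).PosDef := .of_dotProduct_mulVec_pos (hherm t) <| by
    simpa only [star_trivial] using hpos t
  have hσ' : σ'.IsHermitian := isSelfAdjoint_of_hasDerivAt hσ (.of_forall hherm)
  exact trace_deriv_mul_deriv_inv_nonpos_general hposDef hσ' hσ hτ
end

section
/- Let M be any real 2×2 matrix and let σ be a real symmetric positive definite 2×2 matrix. Then there exist real 2×2 matrices Ω, N, B such that Ω and N are antisymmetric (Ωᵀ = −Ω, Nᵀ = −N), B is symmetric (Bᵀ = B) and commutes with σ (B σ = σ B), and M = Ω + B + N σ⁻¹. -/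
open Matrix

/-!
Write `J` for the rotation by a quarter turn, which spans the antisymmetric `2 × 2` matrices. Since
`Aᵀ J A = det A • J`, the terms `N σ⁻¹` are exactly the multiples `m • σ J`. Once `m` is fixed, `Ω`
and `B` must be the antisymmetric and symmetric parts of `M - m • σ J`, so the only condition is
that the symmetric part commutes with `σ`. Commutators of symmetric matrices are multiples of `J`,
so this is one scalar linear equation for `m`, whose leading coefficient is the discriminant of `σ`
up to sign. If the discriminant vanishes, then, being the sum of squares
`(σ₀₀ - σ₁₁)² + (2 σ₀₁)²`, it forces `σ` to be scalar, and every `m` works.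
-/

section NegOneNotSquare

variable {K : Type*} [Field K]

theorem two_ne_zero_of_not_isSquare_neg_one (hK : ¬IsSquare (-1 : K)) : (2 : K) ≠ 0 := by
  intro h
  exact hK ⟨1, by linear_combination -h⟩

theorem eq_zero_of_sq_add_sq_eq_zero (hK : ¬IsSquare (-1 : K)) {x y : K}
    (h : x ^ 2 + y ^ 2 = 0) : x = 0 ∧ y = 0 := by
  have hy : y = 0 := by
    by_contra hy
    refine hK ⟨x / y, ?_⟩
    field_simp
    linear_combination -h
  exact ⟨by simpa [hy] using h, hy⟩

end NegOneNotSquare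

theorem det_ne_zero_of_dotProduct_mulVec_ne_zero {n R : Type*} [Fintype n] [DecidableEq n]
    [CommRing R] [IsDomain R] {A : Matrix n n R} (hA : ∀ x, x ≠ 0 → x ⬝ᵥ A *ᵥ x ≠ 0) :
    A.det ≠ 0 := by
  intro hdet
  obtain ⟨x, hx, hAx⟩ := exists_mulVec_eq_zero_iff.mpr hdet
  exact hA x hx (by rw [hAx, dotProduct_zero])

section QuarterTurn

variable {R : Type*} [CommRing R]

/-- The matrix `J` of the (clockwise) rotation of the plane by a right angle, used as the generator
of the antisymmetric `2 × 2` matrices; the sign is chosen so that the coefficient of `J` is the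
upper right entry. -/
def quarterTurn : Matrix (Fin 2) (Fin 2) R := !![0, 1; -1, 0]

theorem transpose_quarterTurn : (quarterTurn : Matrix (Fin 2) (Fin 2) R)ᵀ = -quarterTurn := by
  ext i j
  fin_cases i <;> fin_cases j <;> simp [quarterTurn]

theorem transpose_mul_quarterTurn_mul (A : Matrix (Fin 2) (Fin 2) R) :
    Aᵀ * quarterTurn * A = A.det • quarterTurn := by
  ext i j
  fin_cases i <;> fin_cases j <;> simp [quarterTurn, mul_apply, det_fin_two] <;> ring

theorem transpose_mul_quarterTurn_add_quarterTurn_mul (A : Matrix (Fin 2) (Fin 2) R) :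
    Aᵀ * quarterTurn + quarterTurn * A = A.trace • quarterTurn := by
  ext i j
  fin_cases i <;> fin_cases j <;>
    simp [quarterTurn, mul_apply, vecMul, dotProduct, trace_fin_two, add_comm]

theorem det_smul_quarterTurn_mul_inv {A : Matrix (Fin 2) (Fin 2) R} (hA : IsUnit A.det) :
    A.det • quarterTurn * A⁻¹ = Aᵀ * quarterTurn := by
  rw [← transpose_mul_quarterTurn_mul, mul_nonsing_inv_cancel_right _ _ hA]

theorem trace_mul_self_fin_two (A : Matrix (Fin 2) (Fin 2) R) :
    (A * A).trace = A.trace ^ 2 - 2 * A.det := by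
  simp only [trace_fin_two, det_fin_two, mul_apply, Fin.sum_univ_two]
  ring

theorem exists_lie_eq_smul_quarterTurn {A B : Matrix (Fin 2) (Fin 2) R}
    (hA : A.IsSymm) (hB : B.IsSymm) : ∃ c : R, ⁅A, B⁆ = c • quarterTurn := by
  have hA' := hA.apply 0 1
  have hB' := hB.apply 0 1
  refine ⟨(A * B - B * A) 0 1, ?_⟩
  ext i j
  fin_cases i <;> fin_cases j <;>
    simp [quarterTurn, Ring.lie_def, mul_apply, hA', hB'] <;> ring

theorem lie_mul_quarterTurn_sub_quarterTurn_mul {A : Matrix (Fin 2) (Fin 2) R} (hA : A.IsSymm) :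
    ⁅A * quarterTurn - quarterTurn * A, A⁆ = -A.discr • quarterTurn := by
  have hdet := transpose_mul_quarterTurn_mul A
  have htrace := transpose_mul_quarterTurn_add_quarterTurn_mul (A * A)
  rw [transpose_mul, hA.eq] at htrace
  rw [hA.eq] at hdet
  calc ⁅A * quarterTurn - quarterTurn * A, A⁆
      = (2 : R) • (A * quarterTurn * A) - (A * A * quarterTurn + quarterTurn * (A * A)) := by
        rw [Ring.lie_def, two_smul]
        noncomm_ring
    _ = (2 * A.det - (A * A).trace) • quarterTurn := by
        rw [hdet, htrace, smul_smul, ← sub_smul]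
    _ = -A.discr • quarterTurn := by
        rw [trace_mul_self_fin_two, discr_fin_two]
        congr 1
        ring

theorem discr_eq_sq_add_sq_of_isSymm {A : Matrix (Fin 2) (Fin 2) R} (hA : A.IsSymm) :
    A.discr = (A 0 0 - A 1 1) ^ 2 + (2 * A 0 1) ^ 2 := by
  rw [discr_fin_two, trace_fin_two, det_fin_two, hA.apply 0 1]
  ring

end QuarterTurn

section Decomposition

variable {K : Type*} [Field K]

theorem eq_scalar_of_isSymm_of_discr_eq_zero (hK : ¬IsSquare (-1 : K))
    {A : Matrix (Fin 2) (Fin 2) K} (hA : A.IsSymm) (hdiscr : A.discr = 0) :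
    A = scalar (Fin 2) (A 0 0) := by
  rw [discr_eq_sq_add_sq_of_isSymm hA] at hdiscr
  obtain ⟨hdiag, hoff⟩ := eq_zero_of_sq_add_sq_eq_zero hK hdiscr
  have h01 : A 0 1 = 0 :=
    (mul_eq_zero.mp hoff).resolve_left (two_ne_zero_of_not_isSquare_neg_one hK)
  have h10 : A 1 0 = 0 := (hA.apply 0 1).trans h01
  ext i j
  fin_cases i <;> fin_cases j <;> simp [h01, h10, sub_eq_zero.mp hdiag]

theorem exists_commute_sub_smul_quarterTurn (hK : ¬IsSquare (-1 : K))
    {S A : Matrix (Fin 2) (Fin 2) K} (hS : S.IsSymm) (hA : A.IsSymm) :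
    ∃ m : K, Commute (S - m • (A * quarterTurn - quarterTurn * A)) A := by
  by_cases hdiscr : A.discr = 0
  · rw [eq_scalar_of_isSymm_of_discr_eq_zero hK hA hdiscr]
    exact ⟨0, (scalar_commute _ (Commute.all _) _).symm⟩
  · obtain ⟨c, hc⟩ := exists_lie_eq_smul_quarterTurn hS hA
    refine ⟨-c / A.discr, commute_iff_lie_eq.mpr ?_⟩
    set W := A * quarterTurn - quarterTurn * A with hW
    calc ⁅S - (-c / A.discr) • W, A⁆
        = ⁅S, A⁆ - (-c / A.discr) • ⁅W, A⁆ := by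
          simp only [Ring.lie_def, sub_mul, mul_sub, smul_mul_assoc, mul_smul_comm, smul_sub]
          abel
      _ = 0 := by
          rw [hc, hW, lie_mul_quarterTurn_sub_quarterTurn_mul hA, smul_smul, neg_div, neg_mul_neg,
            div_mul_cancel₀ _ hdiscr, sub_self]

theorem exists_eq_add_add_smul_mul_quarterTurn (hK : ¬IsSquare (-1 : K))
    (M : Matrix (Fin 2) (Fin 2) K) {A : Matrix (Fin 2) (Fin 2) K} (hA : A.IsSymm) :
    ∃ (Ω B : Matrix (Fin 2) (Fin 2) K) (m : K),
      Ωᵀ = -Ω ∧ B.IsSymm ∧ Commute B A ∧ M = Ω + B + m • (A * quarterTurn) := by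
  obtain ⟨m, hm⟩ := exists_commute_sub_smul_quarterTurn hK (isSymm_add_transpose_self M) hA
  set X := M - m • (A * quarterTurn) with hX
  have hsymm : X + Xᵀ = M + Mᵀ - m • (A * quarterTurn - quarterTurn * A) := by
    rw [hX, transpose_sub, transpose_smul, transpose_mul, hA.eq, transpose_quarterTurn, neg_mul]
    module
  refine ⟨(2⁻¹ : K) • (X - Xᵀ), (2⁻¹ : K) • (X + Xᵀ), m, ?_, ?_, ?_, ?_⟩
  · rw [transpose_smul, transpose_sub, transpose_transpose, ← smul_neg, neg_sub]
  · exact (isSymm_add_transpose_self X).smul _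
  · exact (hsymm ▸ hm).smul_left _
  · rw [← smul_add, sub_add_add_cancel, ← two_smul K X,
      inv_smul_smul₀ (two_ne_zero_of_not_isSquare_neg_one hK), hX, sub_add_cancel]

theorem exists_decomposition_of_posDef_general (hK : ¬IsSquare (-1 : K))
    (M σ : Matrix (Fin 2) (Fin 2) K) (hσ : σᵀ = σ) (hdet : σ.det ≠ 0) :
    ∃ Ω N B : Matrix (Fin 2) (Fin 2) K,
      Ωᵀ = -Ω ∧ Nᵀ = -N ∧ Bᵀ = B ∧ B * σ = σ * B ∧ M = Ω + B + N * σ⁻¹ := by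
  obtain ⟨Ω, B, m, hΩ, hB, hcomm, hM⟩ := exists_eq_add_add_smul_mul_quarterTurn hK M hσ
  refine ⟨Ω, m • σ.det • quarterTurn, B, hΩ, ?_, hB, hcomm, ?_⟩
  · simp only [transpose_smul, transpose_quarterTurn, smul_neg]
  · rw [smul_mul_assoc, det_smul_quarterTurn_mul_inv hdet.isUnit, hσ, hM]

end Decomposition

/-- Decomposition of an arbitrary real `2 × 2` matrix `M` relative to a symmetric positive
definite matrix `σ`: `M = Ω + B + N σ⁻¹` with `Ω, N` antisymmetric and `B` symmetric and
commuting with `σ`. -/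
theorem exists_decomposition_of_posDef
    (M σ : Matrix (Fin 2) (Fin 2) ℝ)
    (hσ : σᵀ = σ) (hpos : ∀ x : Fin 2 → ℝ, x ≠ 0 → 0 < x ⬝ᵥ σ *ᵥ x) :
    ∃ Ω N B : Matrix (Fin 2) (Fin 2) ℝ,
      Ωᵀ = -Ω ∧ Nᵀ = -N ∧ Bᵀ = B ∧ B * σ = σ * B ∧ M = Ω + B + N * σ⁻¹ :=
  exists_decomposition_of_posDef_general (fun h => neg_one_lt_zero.not_ge h.nonneg) M σ hσ
    (det_ne_zero_of_dotProduct_mulVec_ne_zero fun x hx => (hpos x hx).ne')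
end
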